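/- arXiv:1709.02079 — 4 statements merged into one kernel-verified Lean document; each statement's English description precedes it below -/
import Mathlib

section
/- Let T, T' ⊆ E, and for each (a,b) ∈ T let q_{a,b} ∈ ℤ/qℤ be nonzero and for each (a,b) ∈ T' let q'_{a,b} ∈ ℤ/qℤ be nonzero. If Σ_{(a,b)∈T} q_{a,b}·λ_{a,b} = Σ_{(a,b)∈T'} q'_{a,b}·λ_{a,b} in R'_q, then T = T' and q_{a,b} = q'_{a,b} for every (a,b) ∈ T. -/
noncomputable section

open MvPolynomial Quaternion

/-- The ring `R'_q = (ℤ/qℤ)[x,y]/⟨x^n - 1, y^n - 1⟩`. -/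
abbrev Rq (q n : ℕ) : Type :=
  MvPolynomial (Fin 2) (ZMod q) ⧸
    (Ideal.span {(X 0 : MvPolynomial (Fin 2) (ZMod q)) ^ n - 1, (X 1 : MvPolynomial (Fin 2) (ZMod q)) ^ n - 1})

/-- Evaluation `ev_{a,b} : R'_q → ℤ/qℤ` at a point `(a,b)` with `a^n = b^n = 1`. -/
def ev (q n : ℕ) (a b : ZMod q) (ha : a ^ n = 1) (hb : b ^ n = 1) :
    Rq q n →+* ZMod q :=
  Ideal.Quotient.lift _ (MvPolynomial.eval ![a, b])
    (by
      intro f hf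
      rw [← RingHom.mem_ker]
      refine Ideal.span_le.mpr ?_ hf
      rintro p hp
      rcases hp with rfl | rfl <;>
        simp [RingHom.mem_ker, ha, hb])

/-- The Lagrange interpolant `λ_{a,b} ∈ R'_q`. -/
def lag (q n : ℕ) (a b : ZMod q) : Rq q n :=
  Ideal.Quotient.mk _ (MvPolynomial.C (((n : ZMod q) ^ 2)⁻¹) *
    ∑ i ∈ Finset.range n, ∑ j ∈ Finset.range n,
      MvPolynomial.C (a⁻¹ ^ i * b⁻¹ ^ j) * (X 0 ^ i * X 1 ^ j))

/-- The set `E` of points `(a,b)` with `a^n = b^n = 1`, as a finset. -/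
def Efin (q n : ℕ) [NeZero q] : Finset (ZMod q × ZMod q) :=
  Finset.univ.filter fun p => p.1 ^ n = 1 ∧ p.2 ^ n = 1

/-- Evaluation at an arbitrary point of `(ℤ/qℤ)²` (zero outside `E`). -/
def evAt (q n : ℕ) (p : ZMod q × ZMod q) (f : Rq q n) : ZMod q :=
  if h : p.1 ^ n = 1 ∧ p.2 ^ n = 1 then ev q n p.1 p.2 h.1 h.2 f else 0

/-- Componentwise evaluation of a quaternion of `𝔸_q` at a point of `E`. -/
def qevAt (q n : ℕ) (p : ZMod q × ZMod q) (F : ℍ[Rq q n, 1, 1]) : ℍ[ZMod q, 1, 1] :=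
  ⟨evAt q n p F.re, evAt q n p F.imI, evAt q n p F.imJ, evAt q n p F.imK⟩

/-- The central (scalar) quaternion attached to `s ∈ R'_q`. -/
def cen (q n : ℕ) (s : Rq q n) : ℍ[Rq q n, 1, 1] :=
  algebraMap (Rq q n) ℍ[Rq q n, 1, 1] s

/-- A quaternion over `ℤ/qℤ` regarded as a constant quaternion of `𝔸_q`. -/
def constQ (q n : ℕ) (w : ℍ[ZMod q, 1, 1]) : ℍ[Rq q n, 1, 1] :=
  ⟨Ideal.Quotient.mk _ (MvPolynomial.C w.re), Ideal.Quotient.mk _ (MvPolynomial.C w.imI),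
   Ideal.Quotient.mk _ (MvPolynomial.C w.imJ), Ideal.Quotient.mk _ (MvPolynomial.C w.imK)⟩

/-- The Hamming weight of `ρ(F)`: the number of nonzero components, over all points of `E`,
among the four quaternion components of the evaluation of `F`. -/
def hw (q n : ℕ) [NeZero q] (F : ℍ[Rq q n, 1, 1]) : ℕ :=
  ∑ p ∈ Efin q n,
    ((if (qevAt q n p F).re ≠ 0 then 1 else 0) +
     (if (qevAt q n p F).imI ≠ 0 then 1 else 0) +
     (if (qevAt q n p F).imJ ≠ 0 then 1 else 0) +
     (if (qevAt q n p F).imK ≠ 0 then 1 else 0))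

theorem ev_mk (q n : ℕ) (a b : ZMod q) (ha : a ^ n = 1) (hb : b ^ n = 1)
    (f : MvPolynomial (Fin 2) (ZMod q)) :
    ev q n a b ha hb (Ideal.Quotient.mk _ f) = MvPolynomial.eval ![a, b] f :=
  rfl

theorem ev_smul (q n : ℕ) (a b : ZMod q) (ha : a ^ n = 1) (hb : b ^ n = 1)
    (c : ZMod q) (f : Rq q n) :
    ev q n a b ha hb (c • f) = c * ev q n a b ha hb f := by
  obtain ⟨f, rfl⟩ := Ideal.Quotient.mk_surjective f
  have hsmul : c • (Ideal.Quotient.mk _ f : Rq q n) = Ideal.Quotient.mk _ (c • f) := rfl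
  rw [hsmul, ev_mk, ev_mk, MvPolynomial.smul_eval]

/-- A geometric sum of quotients of `n`-th roots of unity. -/
theorem sum_inv_mul_pow_of_pow_eq_one {K : Type*} [Field K] [DecidableEq K] {n : ℕ}
    (hn : 0 < n) {a x : K} (ha : a ^ n = 1) (hx : x ^ n = 1) :
    ∑ i ∈ Finset.range n, (a⁻¹ * x) ^ i = if a = x then (n : K) else 0 := by
  have ha0 : a ≠ 0 := by
    rintro rfl
    simp [hn.ne'] at ha
  split_ifs with hax
  · subst hax
    simp [ha0]
  · have hne : a⁻¹ * x ≠ 1 := fun h => hax ((inv_mul_eq_one₀ ha0).mp h)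
    rw [geom_sum_eq hne, mul_pow, inv_pow, ha, hx]
    simp

/-- The Lagrange interpolants are dual to the evaluations at the points of `E`. -/
theorem ev_lag (q n : ℕ) [Fact q.Prime] (hnq : (n : ZMod q) ≠ 0) (hn : 0 < n)
    {a b x y : ZMod q} (ha : a ^ n = 1) (hb : b ^ n = 1) (hx : x ^ n = 1) (hy : y ^ n = 1) :
    ev q n x y hx hy (lag q n a b) = if (a, b) = (x, y) then 1 else 0 := by
  have hsum : ev q n x y hx hy (lag q n a b) = ((n : ZMod q) ^ 2)⁻¹ *
      ((∑ i ∈ Finset.range n, (a⁻¹ * x) ^ i) * ∑ j ∈ Finset.range n, (b⁻¹ * y) ^ j) := by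
    rw [lag, ev_mk, Finset.sum_mul_sum]
    simp only [map_mul, map_sum, map_pow, eval_C, eval_X, Matrix.cons_val_zero,
      Matrix.cons_val_one, mul_pow]
    congr 1
    refine Finset.sum_congr rfl fun i _ => Finset.sum_congr rfl fun j _ => ?_
    ring
  rw [hsum, sum_inv_mul_pow_of_pow_eq_one hn ha hx, sum_inv_mul_pow_of_pow_eq_one hn hb hy]
  by_cases h1 : a = x <;> by_cases h2 : b = y <;> simp [h1, h2]
  field_simp

theorem natCast_ne_zero_of_dvd_sub_one (q n : ℕ) [hq : Fact q.Prime] (hn : n ∣ q - 1) :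
    (n : ZMod q) ≠ 0 := by
  rw [Ne, ZMod.natCast_eq_zero_iff]
  intro h
  have h2 := hq.out.two_le
  have := Nat.le_of_dvd (by omega) (h.trans hn)
  omega

/-- Evaluating a combination of Lagrange interpolants recovers its coefficients. -/
theorem ev_sum_smul_lag (q n : ℕ) [Fact q.Prime] (hnq : (n : ZMod q) ≠ 0) (hn : 0 < n)
    {T : Finset (ZMod q × ZMod q)} (hT : T ⊆ Efin q n) (c : ZMod q × ZMod q → ZMod q)
    (p : ZMod q × ZMod q) (hx : p.1 ^ n = 1) (hy : p.2 ^ n = 1) :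
    ev q n p.1 p.2 hx hy (∑ r ∈ T, c r • lag q n r.1 r.2) = if p ∈ T then c p else 0 := by
  rw [map_sum, ← Finset.sum_ite_eq' T p c]
  refine Finset.sum_congr rfl fun r hr => ?_
  obtain ⟨hr1, hr2⟩ := (Finset.mem_filter.mp (hT hr)).2
  rw [ev_smul, ev_lag q n hnq hn hr1 hr2]
  simp

/-- Uniqueness of the representation of an element of `R'_q` as a combination
`Σ_{(a,b)∈T} q_{a,b}·λ_{a,b}` with nonzero coefficients: if two such combinations (over subsets
`T, T'` of `E`) coincide, then `T = T'` and the coefficients agree on `T`. -/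
theorem stmt3 (q n : ℕ) [Fact q.Prime] (hn : n ∣ q - 1) (hnpos : 0 < n)
    (T T' : Finset (ZMod q × ZMod q)) (hT : T ⊆ Efin q n) (hT' : T' ⊆ Efin q n)
    (c c' : ZMod q × ZMod q → ZMod q)
    (hc : ∀ p ∈ T, c p ≠ 0) (hc' : ∀ p ∈ T', c' p ≠ 0)
    (h : ∑ p ∈ T, c p • lag q n p.1 p.2 = ∑ p ∈ T', c' p • lag q n p.1 p.2) :
    T = T' ∧ ∀ p ∈ T, c p = c' p := by
  have hnq := natCast_ne_zero_of_dvd_sub_one q n hn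
  have key : ∀ p ∈ Efin q n, (if p ∈ T then c p else 0) = if p ∈ T' then c' p else 0 := by
    intro p hp
    obtain ⟨hx, hy⟩ := (Finset.mem_filter.mp hp).2
    rw [← ev_sum_smul_lag q n hnq hnpos hT c p hx hy, h, ev_sum_smul_lag q n hnq hnpos hT']
  have hTT' : T = T' := by
    ext p
    constructor
    · intro hp
      by_contra hp'
      exact hc p hp (by simpa [hp, hp'] using key p (hT hp))
    · intro hp'
      by_contra hp
      exact hc' p hp' (by simpa [hp, hp'] using (key p (hT' hp')).symm)
  refine ⟨hTT', fun p hp => ?_⟩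
  simpa [hp, hTT' ▸ hp] using key p (hT hp)
end
end

section
/- Decryption correctness of BQTRU: let σ ∈ R'_q be regarded as a central element of 𝔸_q, let p ∈ ℤ/qℤ be a scalar, and let F, F⁻¹, α, G, W, Φ, M ∈ 𝔸_q satisfy F∘F⁻¹ = F⁻¹∘F = 1 + α∘σ. Set H̃ = F⁻¹∘G + W∘σ and C = p·(H̃∘Φ) + M. Then F∘C = p·(G∘Φ) + F∘M + (p·(α∘G∘Φ) + p·(F∘W∘Φ))∘σ; in particular F∘C − p·(G∘Φ) − F∘M lies in the two-sided ideal of 𝔸_q generated by σ. -/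
noncomputable section

open MvPolynomial Quaternion

/-- Scalar quaternions are central. -/
theorem cen_mul_comm (q n : ℕ) (s : Rq q n) (A : ℍ[Rq q n, 1, 1]) :
    cen q n s * A = A * cen q n s :=
  Algebra.commutes s A

/-- The componentwise action of `ℤ/qℤ` on `𝔸_q` is multiplication by a scalar quaternion. -/
theorem smul_eq_cen_mul (q n : ℕ) (p : ZMod q) (A : ℍ[Rq q n, 1, 1]) :
    p • A = cen q n (algebraMap (ZMod q) (Rq q n) p) * A := by
  rw [cen, ← Algebra.smul_def]
  ext <;> simp only [QuaternionAlgebra.re_smul, QuaternionAlgebra.imI_smul,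
    QuaternionAlgebra.imJ_smul, QuaternionAlgebra.imK_smul, algebraMap_smul]

/-- The action of `ℤ/qℤ` on `𝔸_q` commutes with left multiplication. -/
theorem mul_smul_zmod (q n : ℕ) (p : ZMod q) (A B : ℍ[Rq q n, 1, 1]) :
    A * p • B = p • (A * B) := by
  rw [smul_eq_cen_mul, smul_eq_cen_mul, ← mul_assoc, ← cen_mul_comm, mul_assoc]

/-- The action of `ℤ/qℤ` on `𝔸_q` is compatible with right multiplication. -/
theorem smul_zmod_mul (q n : ℕ) (p : ZMod q) (A B : ℍ[Rq q n, 1, 1]) :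
    p • A * B = p • (A * B) := by
  rw [smul_eq_cen_mul, smul_eq_cen_mul, mul_assoc]

/-- Decryption correctness of BQTRU: if `F∘F⁻¹ = F⁻¹∘F = 1 + α∘σ`,
`H̃ = F⁻¹∘G + W∘σ` and `C = p·(H̃∘Φ) + M`, then
`F∘C = p·(G∘Φ) + F∘M + (p·(α∘G∘Φ) + p·(F∘W∘Φ))∘σ`; in particular `F∘C − p·(G∘Φ) − F∘M`
lies in the two-sided ideal of `𝔸_q` generated by `σ`. -/
theorem stmt7 (q n : ℕ) [Fact q.Prime] (hn : n ∣ q - 1) (hnpos : 0 < n)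
    (σ : Rq q n) (p : ZMod q)
    (F Finv α G W Φ M : ℍ[Rq q n, 1, 1])
    (h1 : F * Finv = 1 + α * cen q n σ)
    (h2 : Finv * F = 1 + α * cen q n σ)
    (H C : ℍ[Rq q n, 1, 1])
    (hH : H = Finv * G + W * cen q n σ)
    (hC : C = p • (H * Φ) + M) :
    F * C = p • (G * Φ) + F * M + (p • (α * G * Φ) + p • (F * W * Φ)) * cen q n σ ∧
    F * C - p • (G * Φ) - F * M ∈ TwoSidedIdeal.span {cen q n σ} := by
  have key : F * C =
      p • (G * Φ) + F * M + (p • (α * G * Φ) + p • (F * W * Φ)) * cen q n σ := by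
    have hG : F * (Finv * G * Φ) = G * Φ + α * G * Φ * cen q n σ := by
      calc F * (Finv * G * Φ) = F * Finv * (G * Φ) := by simp only [mul_assoc]
        _ = G * Φ + α * (cen q n σ * (G * Φ)) := by rw [h1, add_mul, one_mul, mul_assoc]
        _ = G * Φ + α * G * Φ * cen q n σ := by rw [cen_mul_comm]; simp only [mul_assoc]
    have hW : F * (W * cen q n σ * Φ) = F * W * Φ * cen q n σ := by
      rw [mul_assoc W, cen_mul_comm]; simp only [mul_assoc]
    rw [hC, hH, mul_add, mul_smul_zmod, add_mul, mul_add, hG, hW]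
    simp only [smul_add, add_mul, smul_zmod_mul]
    abel
  refine ⟨key, ?_⟩
  rw [key, add_sub_right_comm, add_sub_right_comm, add_sub_cancel_left, sub_self, zero_add]
  exact TwoSidedIdeal.mul_mem_left _ _ _ (TwoSidedIdeal.subset_span rfl)
end
end

section
/- For every real number n ≥ 9, the following inequality holds: 16n²/7 + 4n·(log₂(3.4n² + 1) + 1) ≤ ((2·log₂(3.4n² + 1) + 6) · n² · (3.4n² + 1)^{2/log₂(27.4n² + 8)}) / (π·e). -/
open Real

theorem five_halves_le_two_rpow : (5 / 2 : ℝ) ≤ 2 ^ (4 / 3 : ℝ) := by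
  refine le_of_pow_le_pow_left₀ three_ne_zero (by positivity) ?_
  rw [← rpow_mul_natCast two_pos.le]
  norm_num

theorem pi_mul_exp_one_le : π * exp 1 ≤ 8.55 := by
  have hpi := pi_lt_d4
  have he := exp_one_lt_d9
  calc π * exp 1 ≤ 3.1416 * 2.7182818286 := by gcongr
    _ ≤ 8.55 := by norm_num

/-- For every real `n ≥ 9`,
`16n²/7 + 4n(log₂(3.4n²+1) + 1) ≤ ((2log₂(3.4n²+1) + 6)·n²·(3.4n²+1)^(2/log₂(27.4n²+8)))/(πe)`. -/
theorem stmt14 (n : ℝ) (hn : 9 ≤ n) :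
    16 * n ^ 2 / 7 + 4 * n * (Real.logb 2 (3.4 * n ^ 2 + 1) + 1) ≤
      ((2 * Real.logb 2 (3.4 * n ^ 2 + 1) + 6) * n ^ 2 *
        (3.4 * n ^ 2 + 1) ^ (2 / Real.logb 2 (27.4 * n ^ 2 + 8))) /
      (Real.pi * Real.exp 1) := by
  have ha : (2 : ℝ) ^ (8 : ℝ) ≤ 3.4 * n ^ 2 + 1 := by norm_num; nlinarith
  have ha0 : (0 : ℝ) < 3.4 * n ^ 2 + 1 := by positivity
  have hb0 : (0 : ℝ) < 27.4 * n ^ 2 + 8 := by positivity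
  have hM : logb 2 (27.4 * n ^ 2 + 8) ≤ logb 2 (3.4 * n ^ 2 + 1) + 4 := by
    rw [logb_le_iff_le_rpow one_lt_two hb0, rpow_add two_pos,
      rpow_logb two_pos (by norm_num) ha0]
    norm_num
    nlinarith
  have hM0 : 0 < logb 2 (27.4 * n ^ 2 + 8) := logb_pos one_lt_two (by nlinarith)
  have hL : 8 ≤ logb 2 (3.4 * n ^ 2 + 1) := (le_logb_iff_rpow_le one_lt_two ha0).2 ha
  have hpow : (5 / 2 : ℝ) ≤ (3.4 * n ^ 2 + 1) ^ (2 / logb 2 (27.4 * n ^ 2 + 8)) := by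
    refine five_halves_le_two_rpow.trans ?_
    conv_rhs => rw [← rpow_logb two_pos (by norm_num) ha0, ← rpow_mul two_pos.le]
    refine rpow_le_rpow_of_exponent_le one_le_two ?_
    rw [mul_div_assoc', le_div_iff₀ hM0]
    linarith
  generalize (3.4 * n ^ 2 + 1) ^ (2 / logb 2 (27.4 * n ^ 2 + 8)) = P at hpow ⊢
  generalize logb 2 (3.4 * n ^ 2 + 1) = L at hL ⊢
  have hn2 : 9 * n ≤ n ^ 2 := by nlinarith
  have hlhs : 16 * n ^ 2 / 7 + 4 * n * (L + 1) ≤ (16 / 7 + 4 / 9 * (L + 1)) * n ^ 2 := by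
    nlinarith [mul_le_mul_of_nonneg_right hn2 (by linarith : 0 ≤ L + 1)]
  rw [le_div_iff₀ (by positivity)]
  calc (16 * n ^ 2 / 7 + 4 * n * (L + 1)) * (π * exp 1)
      ≤ ((16 / 7 + 4 / 9 * (L + 1)) * n ^ 2) * (8.55 : ℝ) :=
        mul_le_mul hlhs pi_mul_exp_one_le (by positivity) (by positivity)
    _ ≤ (2 * L + 6) * n ^ 2 * (5 / 2) := by nlinarith [sq_nonneg n]
    _ ≤ (2 * L + 6) * n ^ 2 * P := by gcongr
end

section
/- Gordon–Motzkin theorem: let D be a division ring and P ∈ D[X] a nonzero polynomial of degree m. Call d ∈ D a (right) root of P if there exists Q ∈ D[X] with P = Q·(X − d). Then there exist elements d₁, …, d_m ∈ D such that every right root d of P is conjugate to some d_t, i.e., d = u·d_t·u⁻¹ for some nonzero u ∈ D. In particular, the right roots of P lie in at most m conjugacy classes of D. -/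
open Polynomial in
/-- Right division with remainder by `X - C d` over an arbitrary ring. -/
theorem Polynomial.exists_eq_mul_X_sub_C_add_C_eval {R : Type*} [Ring R] (p : R[X]) (d : R) :
    ∃ q : R[X], p = q * (X - C d) + C (p.eval d) := by
  induction p using Polynomial.induction_on with
  | C a => exact ⟨0, by simp⟩
  | add p q hp hq =>
    obtain ⟨r, hr⟩ := hp
    obtain ⟨s, hs⟩ := hq
    refine ⟨r + s, ?_⟩
    rw [eval_add, C_add, add_mul]
    nth_rewrite 1 [hr, hs]
    abel
  | monomial n a h =>
    obtain ⟨r, hr⟩ := h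
    refine ⟨r * X + C ((C a * X ^ n).eval d), ?_⟩
    rw [pow_succ, ← mul_assoc, eval_mul_X, C_mul]
    nth_rewrite 1 [hr]
    have hX : (X - C d) * X = X * (X - C d) := (X_mul).symm
    rw [add_mul, add_mul, mul_assoc r, hX, ← mul_assoc, mul_sub (C _) X]
    abel

open Polynomial in
/-- The product formula for evaluating `q * (X - C a)` over a division ring. -/
theorem Polynomial.eval_mul_X_sub_C_of_ne {D : Type*} [DivisionRing D] (q : D[X]) {a d : D}
    (h : d ≠ a) :
    (q * (X - C a)).eval d = q.eval ((d - a) * d * (d - a)⁻¹) * (d - a) := by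
  have hc : d - a ≠ 0 := sub_ne_zero.mpr h
  induction q using Polynomial.induction_on' with
  | add p q hp hq => rw [add_mul, eval_add, hp, hq, eval_add, add_mul]
  | monomial n b =>
    have hpow : ((d - a) * d * (d - a)⁻¹) ^ n = (d - a) * d ^ n * (d - a)⁻¹ :=
      Units.conj_pow (Units.mk0 _ hc) d n
    rw [mul_sub, eval_sub, eval_mul_X, monomial_mul_C, eval_monomial, eval_monomial,
      eval_monomial, hpow, mul_assoc b _ (d - a), inv_mul_cancel_right₀ hc, sub_mul, mul_sub,
      mul_assoc b, mul_assoc b, ← pow_succ, ← pow_succ']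

/-- Gordon–Motzkin theorem: let `D` be a division ring and `P ∈ D[X]` a
nonzero polynomial of degree `m`. Then there exist `d₁, …, d_m ∈ D` such that every right root
`d` of `P` (i.e. `P = Q·(X − d)` for some `Q`) is conjugate to some `d_t`. In particular the
right roots of `P` lie in at most `m` conjugacy classes of `D`. -/
theorem stmt19 (D : Type*) [DivisionRing D] (m : ℕ) (P : Polynomial D)
    (hP : P ≠ 0) (hdeg : P.natDegree = m) :
    ∃ ds : Fin m → D, ∀ d : D,
      (∃ Q : Polynomial D, P = Q * (Polynomial.X - Polynomial.C d)) →
      ∃ t : Fin m, ∃ u : D, u ≠ 0 ∧ d = u * ds t * u⁻¹ := by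
  induction m generalizing P with
  | zero =>
    refine ⟨Fin.elim0, ?_⟩
    rintro d ⟨Q, rfl⟩
    have hQ : Q ≠ 0 := left_ne_zero_of_mul hP
    rw [Polynomial.natDegree_mul hQ (Polynomial.X_sub_C_ne_zero d),
      Polynomial.natDegree_X_sub_C] at hdeg
    omega
  | succ m ih =>
    by_cases hroot : ∃ a : D, ∃ Q : Polynomial D, P = Q * (Polynomial.X - Polynomial.C a)
    · obtain ⟨a, Q, rfl⟩ := hroot
      have hQ : Q ≠ 0 := left_ne_zero_of_mul hP
      rw [Polynomial.natDegree_mul hQ (Polynomial.X_sub_C_ne_zero a),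
        Polynomial.natDegree_X_sub_C] at hdeg
      obtain ⟨ds, hds⟩ := ih Q hQ (by omega)
      refine ⟨Fin.cons a ds, ?_⟩
      rintro d ⟨R, hR⟩
      by_cases hda : d = a
      · exact ⟨0, 1, one_ne_zero, by simp [hda]⟩
      have hc : d - a ≠ 0 := sub_ne_zero.mpr hda
      have heval : Q.eval ((d - a) * d * (d - a)⁻¹) = 0 := by
        have h := Polynomial.eval_mul_X_sub_C_of_ne Q hda
        rw [hR, Polynomial.eval_mul_X_sub_C] at h
        exact (mul_eq_zero.mp h.symm).resolve_right hc
      obtain ⟨S, hS⟩ :=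
        Polynomial.exists_eq_mul_X_sub_C_add_C_eval Q ((d - a) * d * (d - a)⁻¹)
      rw [heval, Polynomial.C_0, add_zero] at hS
      obtain ⟨t, u, hu, htu⟩ := hds _ ⟨S, hS⟩
      refine ⟨t.succ, (d - a)⁻¹ * u, mul_ne_zero (inv_ne_zero hc) hu, ?_⟩
      calc d = (d - a)⁻¹ * ((d - a) * d * (d - a)⁻¹) * (d - a) := by
            simp [mul_assoc, hc]
        _ = (d - a)⁻¹ * u * (Fin.cons a ds : Fin (m + 1) → D) t.succ * ((d - a)⁻¹ * u)⁻¹ := by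
            rw [htu, Fin.cons_succ, mul_inv_rev, inv_inv]
            simp only [mul_assoc]
    · exact ⟨0, fun d hd => (hroot ⟨d, hd⟩).elim⟩
end
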